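/- Let S be a finite set of points in the plane and let p be a point not in S such that S ∪ {p} is in general position. Then f_{S∪{p}}(S, S) − f_S(S, S) = Σ_{q∈S} Σ_{r ∈ S, r strictly to the left of the directed line from p to q} λ_S(q,r). -/

import Mathlib

open Finset

/-- The plane. -/
abbrev Plane : Type := ℝ × ℝ

/-- The determinant det(q - p, r - p). -/
def det2 (p q r : Plane) : ℝ :=
  (q.1 - p.1) * (r.2 - p.2) - (q.2 - p.2) * (r.1 - p.1)

/-- `r` is strictly to the left of the directed line from `p` to `q`. -/
def LeftOf (p q r : Plane) : Prop := 0 < det2 p q r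

/-- `r` is strictly to the right of the directed line from `p` to `q`. -/
def RightOf (p q r : Plane) : Prop := det2 p q r < 0

/-- A finite point set is in general position if no three of its points are collinear. -/
def GenPos (S : Finset Plane) : Prop :=
  ∀ p ∈ S, ∀ q ∈ S, ∀ r ∈ S, p ≠ q → p ≠ r → q ≠ r →
    ¬ Collinear ℝ ({p, q, r} : Set Plane)

open Classical in
/-- `lam S p q` is the number of points of `S` strictly to the left of the directed
line from `p` to `q`, with `lam S p p = 0`. -/
noncomputable def lam (S : Finset Plane) (p q : Plane) : ℕ :=
  if p = q then 0 else (S.filter fun r => LeftOf p q r).card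

/-- A finite point set is in convex position if no one of its points lies in the
convex hull of the others. -/
def ConvexPos (P : Finset Plane) : Prop :=
  ∀ x ∈ P, x ∉ convexHull ℝ ((P.erase x : Finset Plane) : Set Plane)

/-- `fS S P Q = ∑_{p ∈ P} ∑_{q ∈ Q} C(lam S p q, 2)`. -/
noncomputable def fS (S P Q : Finset Plane) : ℕ :=
  ∑ p ∈ P, ∑ q ∈ Q, Nat.choose (lam S p q) 2

/-!
Inserting `p` raises `lam S q r` by one when `p` lies to the left of `qr` and leaves it unchanged
otherwise. By Pascal's rule the summand `C(lam S q r, 2)` then grows by `lam S q r` or by `0`, and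
since the determinant is invariant under cyclic permutation, the pairs with growth are those with
`r` to the left of `pq`.
-/

theorem det2_rotate (p q r : Plane) : det2 q r p = det2 p q r := by
  unfold det2
  ring

theorem leftOf_rotate {p q r : Plane} : LeftOf q r p ↔ LeftOf p q r := by
  rw [LeftOf, LeftOf, det2_rotate]

theorem not_leftOf_self (p r : Plane) : ¬LeftOf p p r := by
  simp [LeftOf, det2]

open Classical in
theorem lam_eq_card_filter (S : Finset Plane) (p q : Plane) :
    lam S p q = #{r ∈ S | LeftOf p q r} := by
  rcases eq_or_ne p q with rfl | hpq
  · simp [lam, not_leftOf_self]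
  · exact if_neg hpq

section Insert

variable {S : Finset Plane} {p q r : Plane}

theorem lam_insert_of_leftOf (hp : p ∉ S) (h : LeftOf q r p) :
    lam (insert p S) q r = lam S q r + 1 := by
  classical
  rw [lam_eq_card_filter, lam_eq_card_filter, filter_insert, if_pos h,
    card_insert_of_notMem fun hmem => hp (mem_of_mem_filter p hmem)]

theorem lam_insert_of_not_leftOf (h : ¬LeftOf q r p) :
    lam (insert p S) q r = lam S q r := by
  classical
  rw [lam_eq_card_filter, lam_eq_card_filter, filter_insert, if_neg h]

open Classical in
theorem choose_two_lam_insert (hp : p ∉ S) :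
    (lam (insert p S) q r).choose 2 =
      (lam S q r).choose 2 + if LeftOf p q r then lam S q r else 0 := by
  split_ifs with h
  · rw [lam_insert_of_leftOf hp (leftOf_rotate.mpr h), Nat.choose_succ_succ' _ 1,
      Nat.choose_one_right, add_comm]
  · rw [lam_insert_of_not_leftOf (mt leftOf_rotate.mp h), add_zero]

open Classical in
theorem stmt13_general (P Q : Finset Plane) (hp : p ∉ S) :
    fS (insert p S) P Q =
      fS S P Q + ∑ q ∈ P, ∑ r ∈ Q.filter (fun r => LeftOf p q r), lam S q r := by
  simp only [fS, choose_two_lam_insert hp, sum_add_distrib, sum_filter]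

end Insert

open Classical in
theorem stmt13 (S : Finset Plane) (p : Plane) (hp : p ∉ S)
    (hgp : GenPos (insert p S)) :
    (fS (insert p S) S S : ℤ) - (fS S S S : ℤ) =
      ∑ q ∈ S, ∑ r ∈ S.filter (fun r => LeftOf p q r), (lam S q r : ℤ) := by
  rw [sub_eq_iff_eq_add']
  exact_mod_cast stmt13_general S S hp
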